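/- arXiv:math/0401300 — 2 statements merged into one kernel-verified Lean document; each statement's English description precedes it below -/
import Mathlib

section
/- For every nonnegative integer n, T(3,n) = 16·C_n − 8·C_{n+1} + C_{n+2} (as an identity of rational numbers; here T(3,n) = 60·(2n)!/(n!·(n+3)!)). -/
/-- The super Catalan number `T(m,n) = (1/2) * (2m)! * (2n)! / (m! * n! * (m+n)!)`,
as a rational number. -/
def superCatalan (m n : ℕ) : ℚ :=
  (Nat.factorial (2 * m) * Nat.factorial (2 * n) : ℚ) /
    (2 * (Nat.factorial m * Nat.factorial n * Nat.factorial (m + n)))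

theorem catalan_cast_eq (n : ℕ) :
    (catalan n : ℚ) = (Nat.factorial (2 * n) : ℚ) / (Nat.factorial n * Nat.factorial (n + 1)) := by
  have h1 : ((n : ℚ) + 1) * catalan n = n.centralBinom := by
    exact_mod_cast succ_mul_catalan_eq_centralBinom n
  have h2 : (n.centralBinom : ℚ) * (Nat.factorial n * Nat.factorial n) = Nat.factorial (2 * n) := by
    have h := Nat.choose_mul_factorial_mul_factorial (show n ≤ 2 * n by omega)
    rw [show 2 * n - n = n by omega] at h
    rw [Nat.centralBinom_eq_two_mul_choose, ← mul_assoc]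
    exact_mod_cast h
  have hn : (Nat.factorial n : ℚ) ≠ 0 := by exact_mod_cast Nat.factorial_ne_zero n
  rw [← h2, ← h1, Nat.factorial_succ]
  push_cast
  field_simp

theorem superCatalan_three (n : ℕ) :
    superCatalan 3 n =
      16 * (catalan n : ℚ) - 8 * (catalan (n + 1) : ℚ) + (catalan (n + 2) : ℚ) := by
  have hn : (Nat.factorial n : ℚ) ≠ 0 := by exact_mod_cast Nat.factorial_ne_zero n
  rw [catalan_cast_eq, catalan_cast_eq, catalan_cast_eq, superCatalan, Nat.add_comm 3 n,
    show 2 * (n + 1) = 2 * n + 1 + 1 by ring, show 2 * (n + 2) = 2 * n + 1 + 1 + 1 + 1 by ring,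
    show Nat.factorial (2 * 3) = 720 by rfl, show Nat.factorial 3 = 6 by rfl]
  simp only [Nat.factorial_succ]
  push_cast
  have h1 : (n : ℚ) + 1 ≠ 0 := by positivity
  have h2 : (n : ℚ) + 2 ≠ 0 := by positivity
  have h3 : (n : ℚ) + 3 ≠ 0 := by positivity
  have e2 : (n : ℚ) + 1 + 1 = n + 2 := by ring
  have e3 : (n : ℚ) + 2 + 1 = n + 3 := by ring
  simp only [e2, e3]
  field_simp
  ring
end

section
/- For every integer n ≥ 1, the number of ordered pairs (P,Q) of Dyck paths with semilength(P) + semilength(Q) = n such that |h(P) − h(Q)| ≤ 1 equals the super Catalan number T(2,n) = 6·(2n)!/(n!·(n+2)!). -/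
/-- A ballot path: a sequence of steps, each `+1` or `-1`, all of whose
partial sums are nonnegative. -/
def IsBallot (P : List ℤ) : Prop :=
  (∀ s ∈ P, s = 1 ∨ s = -1) ∧ ∀ k, 0 ≤ (P.take k).sum

/-- A Dyck path of semilength `n`: a ballot path with `2n` steps ending at level `0`. -/
def IsDyck (n : ℕ) (P : List ℤ) : Prop :=
  IsBallot P ∧ P.length = 2 * n ∧ P.sum = 0

/-- The height of a path: the maximum of its partial sums (`0` for the empty path). -/
def pathHeight (P : List ℤ) : ℤ :=
  (((List.range (P.length + 1)).map fun k => (P.take k).sum).foldr max 0)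

/-- Paths of length `m` from level `i` to level `0` staying in the strip `[0,k]`. -/
def stripPaths (k : ℕ) : ℕ → ℤ → Finset (List ℤ)
  | 0, i => if i = 0 then {[]} else ∅
  | m + 1, i => if 0 ≤ i ∧ i ≤ k then
      (stripPaths k m (i + 1)).map ⟨List.cons 1, List.cons_injective⟩ ∪
      (stripPaths k m (i - 1)).map ⟨List.cons (-1), List.cons_injective⟩ else ∅

lemma mem_stripPaths (k m : ℕ) (i : ℤ) (P : List ℤ) : P ∈ stripPaths k m i ↔
    (∀ s ∈ P, s = 1 ∨ s = -1) ∧ P.length = m ∧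
    (∀ j, 0 ≤ i + (P.take j).sum ∧ i + (P.take j).sum ≤ k) ∧ i + P.sum = 0 := by
  induction m generalizing i P with
  | zero =>
    by_cases h : i = 0
    · subst h
      simp only [stripPaths, if_true, Finset.mem_singleton, List.length_eq_zero_iff]
      constructor
      · rintro rfl; simp
      · rintro ⟨_, h, _⟩; exact h
    · simp only [stripPaths, if_neg h, List.length_eq_zero_iff]
      constructor
      · intro h; simp at h
      · rintro ⟨_, rfl, _, h2⟩; simp at h2; exact absurd h2 h
  | succ m ih =>
    rw [stripPaths]
    split_ifs with h
    · simp only [Finset.mem_union, Finset.mem_map, Function.Embedding.coeFn_mk, ih]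
      constructor
      · rintro (⟨Q, ⟨h1, h2, h3, h4⟩, rfl⟩ | ⟨Q, ⟨h1, h2, h3, h4⟩, rfl⟩)
        · refine ⟨?_, by simp [h2], ?_, by rw [List.sum_cons]; linarith⟩
          · intro s hs
            rcases List.mem_cons.1 hs with rfl | hs
            · simp
            · exact h1 s hs
          · intro j
            cases j with
            | zero => simpa using h
            | succ j => rw [List.take_succ_cons, List.sum_cons, ← add_assoc]; exact h3 j
        · refine ⟨?_, by simp [h2], ?_, by rw [List.sum_cons]; linarith⟩
          · intro s hs
            rcases List.mem_cons.1 hs with rfl | hs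
            · simp
            · exact h1 s hs
          · intro j
            cases j with
            | zero => simpa using h
            | succ j =>
              rw [List.take_succ_cons, List.sum_cons, ← add_assoc]; exact h3 j
      · rintro ⟨h1, h2, h3, h4⟩
        cases P with
        | nil => simp at h2
        | cons s Q =>
          have h5 : ∀ j, 0 ≤ i + s + (Q.take j).sum ∧ i + s + (Q.take j).sum ≤ k := by
            intro j
            have := h3 (j + 1)
            rwa [List.take_succ_cons, List.sum_cons, ← add_assoc] at this
          have h6 : ∀ s ∈ Q, s = 1 ∨ s = -1 := fun s hs => h1 s (List.mem_cons_of_mem _ hs)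
          rw [List.sum_cons, ← add_assoc] at h4
          have h7 : Q.length = m := by simpa using h2
          rcases h1 s List.mem_cons_self with rfl | rfl
          · exact Or.inl ⟨Q, ⟨h6, h7, h5, h4⟩, rfl⟩
          · exact Or.inr ⟨Q, ⟨h6, h7, h5, h4⟩, rfl⟩
    · constructor
      · intro h; simp at h
      · rintro ⟨_, _, h3, _⟩
        exact absurd (by simpa using h3 0) h

lemma card_stripPaths_succ (k m : ℕ) (i : ℤ) (h : 0 ≤ i ∧ i ≤ k) :
    (stripPaths k (m + 1) i).card =
      (stripPaths k m (i + 1)).card + (stripPaths k m (i - 1)).card := by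
  rw [stripPaths, if_pos h, Finset.card_union_of_disjoint, Finset.card_map, Finset.card_map]
  rw [Finset.disjoint_left]
  intro P h1 h2
  simp only [Finset.mem_map, Function.Embedding.coeFn_mk] at h1 h2
  obtain ⟨Q, _, rfl⟩ := h1
  obtain ⟨R, _, h⟩ := h2
  injection h with h _
  norm_num at h

lemma stripPaths_neg (k m : ℕ) : stripPaths k m (-1) = ∅ := by
  cases m <;> simp [stripPaths]

lemma stripPaths_top (k m : ℕ) : stripPaths k m (k + 1 : ℤ) = ∅ := by
  cases m
  · simp [stripPaths]; omega
  · simp [stripPaths]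

lemma le_foldr_max (l : List ℤ) (k : ℤ) : l.foldr max 0 ≤ k ↔ 0 ≤ k ∧ ∀ x ∈ l, x ≤ k := by
  induction l with
  | nil => simp
  | cons a l ih => simp [ih]; tauto

lemma pathHeight_le (P : List ℤ) (k : ℕ) :
    pathHeight P ≤ k ↔ ∀ j, (P.take j).sum ≤ k := by
  unfold pathHeight
  rw [le_foldr_max]
  constructor
  · rintro ⟨_, h⟩ j
    by_cases hj : j ≤ P.length
    · exact h _ (List.mem_map.2 ⟨j, List.mem_range.2 (by omega), rfl⟩)
    · rw [List.take_of_length_le (by omega)]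
      have := h _ (List.mem_map.2 ⟨P.length, List.mem_range.2 (by omega), rfl⟩)
      simpa using this
  · intro h
    refine ⟨by positivity, ?_⟩
    intro x hx
    obtain ⟨j, _, rfl⟩ := List.mem_map.1 hx
    exact h j

lemma pathHeight_nonneg (P : List ℤ) : 0 ≤ pathHeight P := by
  unfold pathHeight
  by_contra! h
  have := (le_foldr_max _ _).1 (le_refl (List.foldr max 0
    (List.map (fun k => (List.take k P).sum) (List.range (P.length + 1)))))
  omega

lemma sum_le_length (P : List ℤ) (h : ∀ s ∈ P, s = 1 ∨ s = -1) :
    P.sum ≤ P.length ∧ (2 : ℤ) ∣ P.sum - P.length := by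
  induction P with
  | nil => simp
  | cons a P ih =>
    have := ih fun s hs => h s (List.mem_cons_of_mem _ hs)
    rw [List.sum_cons, List.length_cons]
    push_cast
    rcases h a List.mem_cons_self with rfl | rfl <;> omega

/-- height as a natural number -/
def natHeight (P : List ℤ) : ℕ := (pathHeight P).toNat

lemma natHeight_cast (P : List ℤ) : (natHeight P : ℤ) = pathHeight P :=
  Int.toNat_of_nonneg (pathHeight_nonneg P)

lemma natHeight_le_iff (P : List ℤ) (k : ℕ) :
    natHeight P ≤ k ↔ ∀ j, (P.take j).sum ≤ k := by
  rw [← pathHeight_le, ← natHeight_cast]; norm_cast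

lemma natHeight_le_length (P : List ℤ) (h : ∀ s ∈ P, s = 1 ∨ s = -1) :
    natHeight P ≤ P.length := by
  rw [natHeight_le_iff]
  intro j
  have := (sum_le_length (P.take j) fun s hs => h s (List.mem_of_mem_take hs)).1
  have h2 : (P.take j).length ≤ P.length := by simp
  omega

/-- All returning ballot paths of length `m`. -/
def allPaths (m : ℕ) : Finset (List ℤ) := stripPaths m m 0

lemma mem_allPaths (m : ℕ) (P : List ℤ) :
    P ∈ allPaths m ↔ IsBallot P ∧ P.length = m ∧ P.sum = 0 := by
  unfold allPaths IsBallot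
  rw [mem_stripPaths]
  constructor
  · rintro ⟨h1, h2, h3, h4⟩
    exact ⟨⟨h1, fun j => by simpa using (h3 j).1⟩, h2, by simpa using h4⟩
  · rintro ⟨⟨h1, h3⟩, h2, h4⟩
    have := (natHeight_le_iff P m).1 (h2 ▸ natHeight_le_length P h1)
    exact ⟨h1, h2, fun j => ⟨by simpa using h3 j, by simpa using this j⟩, by simpa using h4⟩

lemma filter_allPaths (k m : ℕ) :
    (allPaths m).filter (fun P => natHeight P < k + 1) = stripPaths k m 0 := by
  ext P
  rw [Finset.mem_filter, mem_allPaths, mem_stripPaths, Nat.lt_succ_iff, natHeight_le_iff, IsBallot]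
  simp only [zero_add]
  constructor
  · rintro ⟨⟨⟨h1, h3⟩, h2, h4⟩, h5⟩
    exact ⟨h1, h2, fun j => ⟨h3 j, h5 j⟩, h4⟩
  · rintro ⟨h1, h2, h3, h4⟩
    exact ⟨⟨⟨h1, fun j => (h3 j).1⟩, h2, h4⟩, fun j => (h3 j).2⟩

open PowerSeries in
/-- Catalan series in `X^2`. -/
noncomputable def catS : PowerSeries ℚ :=
  expand 2 two_ne_zero (PowerSeries.map (Nat.castRingHom ℚ) catalanSeries)

open PowerSeries in
lemma catS_eq : catS = 1 + X ^ 2 * catS ^ 2 := by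
  have h := congrArg (fun f => expand 2 two_ne_zero (PowerSeries.map (Nat.castRingHom ℚ) f))
    catalanSeries_sq_mul_X_add_one
  simp only [map_add, map_mul, map_pow, map_one, map_X, expand_X] at h
  change catS ^ 2 * X ^ 2 + 1 = catS at h
  linear_combination -h

open PowerSeries in
lemma coeff_catS (m : ℕ) : coeff (2 * m) catS = catalan m := by
  simp [catS]

/-- The series `r` with `r = X (1 + r^2)`. -/
noncomputable def rS : PowerSeries ℚ := PowerSeries.X * catS

open PowerSeries in
lemma rS_eq : X * (1 + rS ^ 2) = rS := by
  have := catS_eq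
  unfold rS
  linear_combination -X * this

/-- The series `q`. -/
noncomputable def qS : PowerSeries ℚ := rS ^ 2

open PowerSeries in
lemma one_add_qS : 1 + qS = catS := by
  have := catS_eq
  unfold qS rS
  linear_combination -this

open PowerSeries in
lemma qS_const : constantCoeff qS = 0 := by
  simp [qS, rS]

/-- generating series for strip paths from level `i`. -/
noncomputable def stripS (k : ℕ) (i : ℤ) : PowerSeries ℚ :=
  PowerSeries.mk fun m => ((stripPaths k m i).card : ℚ)

open PowerSeries in
lemma stripS_rec (k : ℕ) (i : ℤ) (h : 0 ≤ i ∧ i ≤ k) :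
    stripS k i = (if i = 0 then 1 else 0) + X * (stripS k (i + 1) + stripS k (i - 1)) := by
  ext m
  cases m with
  | zero =>
    simp only [stripS, stripPaths, coeff_mk, map_add, coeff_zero_X_mul, add_zero]
    split_ifs <;> simp
  | succ m =>
    simp only [stripS, coeff_mk, map_add, coeff_succ_X_mul, card_stripPaths_succ k m i h]
    split_ifs <;> simp [coeff_one]

open PowerSeries in
lemma stripS_neg (k : ℕ) : stripS k (-1) = 0 := by
  ext m; simp [stripS, stripPaths_neg]

open PowerSeries in
lemma stripS_top (k : ℕ) : stripS k (k + 1 : ℤ) = 0 := by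
  ext m; simp [stripS, stripPaths_top]

open PowerSeries in
lemma eq_zero_of_rec (k : ℕ) (D : ℕ → PowerSeries ℚ) (h0 : D 0 = X * D 1)
    (h1 : ∀ i, i + 1 ≤ k → D (i + 1) = X * (D (i + 2) + D i)) (h2 : D (k + 1) = 0) :
    D 0 = 0 := by
  have key : ∀ m i, i ≤ k + 1 → (X : PowerSeries ℚ) ^ m ∣ D i := by
    intro m
    induction m with
    | zero => intro i _; simp
    | succ m ih =>
      intro i hi
      rcases Nat.lt_or_ge i (k + 1) with h | h
      · cases i with
        | zero => rw [h0, pow_succ']; exact mul_dvd_mul_left _ (ih 1 (by omega))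
        | succ i =>
          rw [h1 i (by omega), pow_succ']
          exact mul_dvd_mul_left _ (dvd_add (ih _ (by omega)) (ih _ (by omega)))
      · have : i = k + 1 := by omega
        rw [this, h2]; exact dvd_zero _
  ext m
  simpa using X_pow_dvd_iff.1 (key (m + 1) 0 (by omega)) m (by omega)

open PowerSeries in
lemma stripS_closed (k : ℕ) :
    stripS k 0 * (1 - qS ^ (k + 2)) = (1 + qS) * (1 - qS ^ (k + 1)) := by
  have hr := rS_eq
  have := eq_zero_of_rec k
    (fun i => stripS k i * (1 - qS ^ (k + 2)) - rS ^ i * (1 + qS) * (1 - qS ^ (k + 1 - i)))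
    ?_ ?_ ?_
  · simp only [Nat.cast_zero, pow_zero, one_mul, Nat.sub_zero] at this
    linear_combination this
  · have h := stripS_rec k 0 ⟨le_refl _, by positivity⟩
    simp only [if_true, zero_add, zero_sub, stripS_neg, add_zero] at h
    simp only [Nat.cast_zero, Nat.cast_one, pow_zero, one_mul, Nat.sub_zero, pow_one,
      Nat.add_sub_cancel]
    rw [h]
    have hq : X * rS * (1 + qS) = qS := by unfold qS; linear_combination rS * hr
    linear_combination (1 - qS ^ k) * hq
  · intro i hi
    obtain ⟨j, rfl⟩ := Nat.exists_eq_add_of_le hi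
    have h := stripS_rec (i + 1 + j) (i + 1) ⟨by positivity, by push_cast; omega⟩
    rw [if_neg (by positivity), zero_add, add_sub_cancel_right, add_assoc (i : ℤ) 1 1] at h
    have e1 : i + 1 + j + 1 - (i + 1) = j + 1 := by omega
    have e2 : i + 1 + j + 1 - (i + 2) = j := by omega
    have e3 : i + 1 + j + 1 - i = j + 2 := by omega
    simp only [e1, e2, e3]
    have c1 : ((i + 1 : ℕ) : ℤ) = (i : ℤ) + 1 := by push_cast; ring
    have c2 : ((i + 2 : ℕ) : ℤ) = (i : ℤ) + (1 + 1) := by push_cast; ring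
    rw [c1, c2, h]
    have hq : qS = rS ^ 2 := rfl
    have hr' : X * (1 + qS) = rS := hr
    rw [pow_succ rS i, pow_add rS i 2, ← hq]
    linear_combination (rS ^ i * (1 + qS) * (1 - qS ^ (j + 1))) * hr'
  · have := stripS_top k
    simp only [Nat.cast_add, Nat.cast_one, this]
    simp

lemma field_step {L : Type*} [Field L] (q b : L) (h1 : 1 + q ≠ 0) (a1 : 1 - b * q ≠ 0)
    (a2 : 1 - b * q ^ 2 ≠ 0) (a3 : 1 - b * q ^ 3 ≠ 0) :
    q * (1 - b * q) ^ 2 / (1 - b * q ^ 2) ^ 2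
    - 2 * (1 + q) * (1 - b * q) / (1 - b * q ^ 2)
    + (- q + 2 * (q + 2 * q ^ 2) / (1 + q) ^ 2 - q + 2 * (1 + q) + 4 * (1 - q) / (1 + q))
    - 2 * (1 - q) / (1 + q) * (1 / (1 - b * q) + 1 / (1 - b * q ^ 2)) +
    (((1 + q) * (1 - b * q ^ 2) / (1 - b * q ^ 3) - (1 + q) * (1 - b * q) / (1 - b * q ^ 2)) ^ 2 +
      2 * ((1 + q) * (1 - b * q ^ 2) / (1 - b * q ^ 3) - (1 + q) * (1 - b * q) / (1 - b * q ^ 2)) *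
      ((1 + q) * (1 - b * q) / (1 - b * q ^ 2) - (1 + q) * (1 - b) / (1 - b * q))) *
      (q / (1 + q) ^ 2) =
    q * (1 - b * q ^ 2) ^ 2 / (1 - b * q ^ 3) ^ 2
    - 2 * (1 + q) * (1 - b * q ^ 2) / (1 - b * q ^ 3)
    + (- q + 2 * (q + 2 * q ^ 2) / (1 + q) ^ 2 - q + 2 * (1 + q) + 4 * (1 - q) / (1 + q))
    - 2 * (1 - q) / (1 + q) * (1 / (1 - b * q ^ 2) + 1 / (1 - b * q ^ 3)) := by
  obtain ⟨d1, e1⟩ : ∃ d, d = 1 - b * q := ⟨_, rfl⟩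
  obtain ⟨d2, e2⟩ : ∃ d, d = 1 - b * q ^ 2 := ⟨_, rfl⟩
  obtain ⟨d3, e3⟩ : ∃ d, d = 1 - b * q ^ 3 := ⟨_, rfl⟩
  obtain ⟨d0, e0⟩ : ∃ d, d = 1 + q := ⟨_, rfl⟩
  rw [← e1] at a1
  rw [← e2] at a2
  rw [← e3] at a3
  rw [← e0] at h1
  rw [← e1, ← e2, ← e3, ← e0]
  field_simp
  rw [e1, e2, e3, e0]
  ring

lemma field_sum {L : Type*} [Field L] (q : L) (h1 : 1 + q ≠ 0) (h2 : ∀ j, 1 - q ^ (j + 1) ≠ 0)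
    (E : ℕ → L) (hE : ∀ j, E j = (1 + q) * (1 - q ^ j) / (1 - q ^ (j + 1))) (K : ℕ) :
    (∑ k ∈ Finset.range (K + 1),
      ((E (k + 1) - E k) ^ 2 + 2 * (E (k + 1) - E k) * (E k - E (k - 1)))) * (q / (1 + q) ^ 2) =
    q * (1 - q ^ (K + 1)) ^ 2 / (1 - q ^ (K + 2)) ^ 2
    - 2 * (1 + q) * (1 - q ^ (K + 1)) / (1 - q ^ (K + 2))
    + (- q + 2 * (q + 2 * q ^ 2) / (1 + q) ^ 2 - q + 2 * (1 + q) + 4 * (1 - q) / (1 + q))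
    - 2 * (1 - q) / (1 + q) * (1 / (1 - q ^ (K + 1)) + 1 / (1 - q ^ (K + 2))) := by
  induction K with
  | zero =>
    have a1 := h2 0
    have a2 := h2 1
    simp only [zero_add, pow_one, one_add_one_eq_two] at a1 a2
    simp only [zero_add, Finset.sum_range_one, hE, pow_zero, pow_one, one_add_one_eq_two,
      sub_self, mul_zero, zero_div, sub_zero]
    have e : (1 - q ^ 2) = (1 - q) * (1 + q) := by ring
    rw [e] at *
    field_simp
    ring
  | succ K ih =>
    rw [Finset.sum_range_succ, add_mul, ih]
    have a1 := h2 K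
    have a2 := h2 (K + 1)
    have a3 := h2 (K + 2)
    simp only [hE, Nat.add_sub_cancel]
    have p1 : q ^ (K + 1) = q ^ K * q := by ring
    have p2 : q ^ (K + 1 + 1) = q ^ K * q ^ 2 := by ring
    have p3 : q ^ (K + 1 + 1 + 1) = q ^ K * q ^ 3 := by ring
    have p3'' : q ^ (K + 2 + 1) = q ^ K * q ^ 3 := by ring
    rw [p1] at a1
    rw [p2] at a2
    rw [p3''] at a3
    rw [p3, p2, p1]
    exact field_step q _ h1 a1 a2 a3

lemma field_sum' {L : Type*} [Field L] (q x : L) (h1 : 1 + q ≠ 0) (h2 : ∀ j, 1 - q ^ (j + 1) ≠ 0)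
    (hx : x * (1 + q) ^ 2 = q)
    (E : ℕ → L) (hE : ∀ j, E j * (1 - q ^ (j + 1)) = (1 + q) * (1 - q ^ j)) (K : ℕ) :
    (x * (∑ k ∈ Finset.range (K + 1),
      ((E (k + 1) - E k) ^ 2 + 2 * (E (k + 1) - E k) * (E k - E (k - 1)))) -
      (4 * x * (1 + q) - q - 2 * x)) *
      ((1 + q) * (1 - q ^ (K + 1)) * (1 - q ^ (K + 1) * q) ^ 2) =
    q ^ (K + 1) * (q * (q - 1) * (2 - q ^ (K + 1) - q ^ (K + 1) * q) * (1 + q) * (1 - q ^ (K + 1))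
      - 2 * (1 + q) ^ 2 * (q - 1) * (1 - q ^ (K + 1)) * (1 - q ^ (K + 1) * q)
      - 2 * (1 - q) * ((1 - q ^ (K + 1) * q) ^ 2
        + q * (1 - q ^ (K + 1)) * (1 - q ^ (K + 1) * q))) := by
  have hx' : x = q / (1 + q) ^ 2 := by rw [eq_div_iff (pow_ne_zero 2 h1), hx]
  have hs := field_sum q h1 h2 E (fun j => by rw [eq_div_iff (h2 j), hE]) K
  rw [mul_comm x, hx', hs]
  have a1 := h2 K
  have a2 := h2 (K + 1)
  have p2 : q ^ (K + 1 + 1) = q ^ (K + 1) * q := by ring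
  rw [p2] at a2
  rw [show q ^ (K + 2) = q ^ (K + 1) * q from p2]
  generalize q ^ (K + 1) = a at *
  obtain ⟨d1, e1⟩ : ∃ d, d = 1 - a := ⟨_, rfl⟩
  obtain ⟨d2, e2⟩ : ∃ d, d = 1 - a * q := ⟨_, rfl⟩
  obtain ⟨d0, e0⟩ : ∃ d, d = 1 + q := ⟨_, rfl⟩
  rw [← e1] at a1
  rw [← e2] at a2
  rw [← e0] at h1
  rw [← e1, ← e2, ← e0]
  field_simp
  rw [e1, e2, e0]
  ring

/-- generating series of returning paths with height `< j` -/
noncomputable def eS (j : ℕ) : PowerSeries ℚ :=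
  PowerSeries.mk fun m => (((allPaths m).filter (fun P => natHeight P < j)).card : ℚ)

/-- generating series of returning paths with height `j` -/
noncomputable def gS (j : ℕ) : PowerSeries ℚ :=
  PowerSeries.mk fun m => (((allPaths m).filter (fun P => natHeight P = j)).card : ℚ)

/-- generating series of returning paths with height `j - 1` -/
noncomputable def hS (j : ℕ) : PowerSeries ℚ :=
  PowerSeries.mk fun m => (((allPaths m).filter (fun P => natHeight P + 1 = j)).card : ℚ)

lemma eS_zero : eS 0 = 0 := by
  ext m; simp [eS]

lemma eS_closed (j : ℕ) : eS j * (1 - qS ^ (j + 1)) = (1 + qS) * (1 - qS ^ j) := by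
  cases j with
  | zero => simp [eS_zero]
  | succ k =>
    have : eS (k + 1) = stripS k 0 := by
      ext m; simp only [eS, stripS, PowerSeries.coeff_mk, filter_allPaths]
    rw [this]; exact stripS_closed k

lemma gS_eq (k : ℕ) : gS k = eS (k + 1) - eS k := by
  rw [eq_sub_iff_add_eq]
  ext m
  simp only [eS, gS, PowerSeries.coeff_mk, map_add]
  rw [← Nat.cast_add, ← Finset.card_union_of_disjoint, ← Finset.filter_or]
  · congr 2
    apply Finset.filter_congr
    intro P _
    omega
  · rw [Finset.disjoint_filter]
    intro P _ h
    omega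

lemma hS_eq (k : ℕ) : hS k = eS k - eS (k - 1) := by
  cases k with
  | zero => ext m; simp [hS]
  | succ k =>
    rw [Nat.add_sub_cancel, ← gS_eq]
    ext m
    simp [hS, gS]

open PowerSeries in
lemma isUnit_of_const (f : PowerSeries ℚ) (h : constantCoeff f = 1) : IsUnit f := by
  rw [isUnit_iff_constantCoeff, h]; exact isUnit_one

open PowerSeries in
lemma coeff_total (n K : ℕ) (hK : n < K) :
    coeff (2 * n) (∑ k ∈ Finset.range (K + 1), (gS k * gS k + gS k * hS k + hS k * gS k)) =
      coeff (2 * n + 2) (4 * X ^ 2 * catS - catS + 1 - 2 * X ^ 2) := by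
  have hc : ∀ j, constantCoeff (1 - qS ^ (j + 1)) = 1 := by
    intro j; simp [qS_const]
  have hS1 : (∑ k ∈ Finset.range (K + 1), (gS k * gS k + gS k * hS k + hS k * gS k)) =
      ∑ k ∈ Finset.range (K + 1),
      ((eS (k + 1) - eS k) ^ 2 + 2 * (eS (k + 1) - eS k) * (eS k - eS (k - 1))) := by
    apply Finset.sum_congr rfl
    intro k _
    rw [gS_eq, hS_eq]; ring
  set S := ∑ k ∈ Finset.range (K + 1), (gS k * gS k + gS k * hS k + hS k * gS k) with hSdef
  let ι := algebraMap (PowerSeries ℚ) (FractionRing (PowerSeries ℚ))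
  have hι : Function.Injective ι := IsFractionRing.injective _ _
  have hu1 : IsUnit (1 + qS) := isUnit_of_const _ (by simp [qS_const])
  have hu2 : ∀ j, IsUnit (1 - qS ^ (j + 1)) := fun j => isUnit_of_const _ (hc j)
  have hx : (X : PowerSeries ℚ) ^ 2 * (1 + qS) ^ 2 = qS := by
    rw [← mul_pow]; unfold qS; rw [rS_eq]
  have key := field_sum' (ι qS) (ι (X ^ 2))
    (by have := (hu1.map ι).ne_zero; simpa using this)
    (fun j => by have := ((hu2 j).map ι).ne_zero; simpa using this)
    (by have := congrArg ι hx; simpa using this)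
    (fun j => ι (eS j)) (fun j => by have := congrArg ι (eS_closed j); simpa using this) K
  have key2 : (X ^ 2 * S - (4 * X ^ 2 * (1 + qS) - qS - 2 * X ^ 2)) *
      ((1 + qS) * (1 - qS ^ (K + 1)) * (1 - qS ^ (K + 1) * qS) ^ 2) =
    qS ^ (K + 1) * (qS * (qS - 1) * (2 - qS ^ (K + 1) - qS ^ (K + 1) * qS) * (1 + qS) *
        (1 - qS ^ (K + 1))
      - 2 * (1 + qS) ^ 2 * (qS - 1) * (1 - qS ^ (K + 1)) * (1 - qS ^ (K + 1) * qS)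
      - 2 * (1 - qS) * ((1 - qS ^ (K + 1) * qS) ^ 2
        + qS * (1 - qS ^ (K + 1)) * (1 - qS ^ (K + 1) * qS))) := by
    apply hι
    rw [hS1]
    simp only [map_mul, map_sub, map_add, map_pow, map_one, map_sum, map_ofNat] at key ⊢
    exact key
  have hd : (X : PowerSeries ℚ) ^ (2 * (K + 1)) ∣ qS ^ (K + 1) := by
    rw [pow_mul]
    apply pow_dvd_pow_of_dvd
    exact ⟨_, hx.symm⟩
  have hunit : IsUnit ((1 + qS) * (1 - qS ^ (K + 1)) * (1 - qS ^ (K + 1) * qS) ^ 2) := by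
    have := hu2 (K + 1)
    rw [pow_succ] at this
    exact (hu1.mul (hu2 K)).mul (this.pow 2)
  have hdvd : (X : PowerSeries ℚ) ^ (2 * (K + 1)) ∣
      X ^ 2 * S - (4 * X ^ 2 * (1 + qS) - qS - 2 * X ^ 2) := by
    rw [← hunit.dvd_mul_right, key2]
    exact Dvd.dvd.mul_right hd _
  have hco := X_pow_dvd_iff.1 hdvd (2 * n + 2) (by omega)
  rw [map_sub, sub_eq_zero, coeff_X_pow_mul] at hco
  rw [hco, ← one_add_qS]
  congr 1
  ring

lemma card_close (A B : Finset (List ℤ)) (K : ℕ) (hA : ∀ P ∈ A, natHeight P ≤ K)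
    (hB : ∀ P ∈ B, natHeight P ≤ K) :
    (((A ×ˢ B).filter (fun p => |pathHeight p.1 - pathHeight p.2| ≤ 1)).card : ℚ) =
    ∑ k ∈ Finset.range (K + 1),
      (((A.filter (fun P => natHeight P = k)).card : ℚ) *
          ((B.filter (fun P => natHeight P = k)).card : ℚ) +
       ((A.filter (fun P => natHeight P = k)).card : ℚ) *
          ((B.filter (fun P => natHeight P + 1 = k)).card : ℚ) +
       ((A.filter (fun P => natHeight P + 1 = k)).card : ℚ) *
          ((B.filter (fun P => natHeight P = k)).card : ℚ)) := by
  simp only [Finset.card_filter, Nat.cast_sum, Finset.sum_mul_sum, ← Finset.sum_add_distrib]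
  rw [Finset.sum_product, Finset.sum_comm]
  conv_rhs => rw [Finset.sum_comm]
  rw [Finset.sum_comm]
  apply Finset.sum_congr rfl
  intro P hP
  rw [Finset.sum_comm]
  apply Finset.sum_congr rfl
  intro Q hQ
  have h1 := hA P hP
  have h2 := hB Q hQ
  have h3 : |pathHeight P - pathHeight Q| ≤ 1 ↔
      natHeight P = natHeight Q ∨ natHeight P = natHeight Q + 1 ∨
      natHeight P + 1 = natHeight Q := by
    rw [← natHeight_cast, ← natHeight_cast, abs_le]; omega
  simp only [h3]
  generalize natHeight P = x at *
  generalize natHeight Q = y at *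
  simp only [Nat.cast_ite, Nat.cast_one, Nat.cast_zero, ite_mul, one_mul, zero_mul,
    Finset.sum_add_distrib, Finset.sum_ite_eq, Finset.mem_range]
  split_ifs <;> first | omega | norm_num

lemma final_arith (n : ℕ) (hn : 1 ≤ n) :
    4 * (catalan n : ℚ) - catalan (n + 1) = superCatalan 2 n := by
  have h1 : ((n : ℚ) + 1) * catalan n = n.centralBinom := by
    exact_mod_cast succ_mul_catalan_eq_centralBinom n
  have h2 : ((n : ℚ) + 2) * catalan (n + 1) = (n + 1).centralBinom := by
    have := succ_mul_catalan_eq_centralBinom (n + 1)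
    exact_mod_cast this
  have h3 : ((n : ℚ) + 1) * (n + 1).centralBinom = 2 * (2 * n + 1) * n.centralBinom := by
    exact_mod_cast Nat.succ_mul_centralBinom_succ n
  have h4 : (n.centralBinom : ℚ) * (n.factorial * n.factorial) = (2 * n).factorial := by
    have := Nat.choose_mul_factorial_mul_factorial (show n ≤ 2 * n by omega)
    rw [show 2 * n - n = n by omega] at this
    rw [Nat.centralBinom_eq_two_mul_choose, ← mul_assoc]
    exact_mod_cast this
  have f0 : (n.factorial : ℚ) ≠ 0 := by positivity
  have e1 : (catalan n : ℚ) = n.centralBinom / (n + 1) := by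
    rw [eq_div_iff (by positivity), ← h1]; ring
  have e3 : ((n + 1).centralBinom : ℚ) = 2 * (2 * n + 1) * n.centralBinom / (n + 1) := by
    rw [eq_div_iff (by positivity), ← h3]; ring
  have e2 : (catalan (n + 1) : ℚ) = (n + 1).centralBinom / (n + 2) := by
    rw [eq_div_iff (by positivity), ← h2]; ring
  unfold superCatalan
  rw [e2, e3, e1, ← h4, show 2 + n = n + 1 + 1 by ring, Nat.factorial_succ (n + 1),
    Nat.factorial_succ n]
  have : ((2 * 2).factorial : ℚ) = 24 := by norm_num [Nat.factorial]
  rw [this]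
  have : (Nat.factorial 2 : ℚ) = 2 := by norm_num [Nat.factorial]
  rw [this]
  push_cast
  have g1 : (n : ℚ) + 1 ≠ 0 := by positivity
  have g2 : (n : ℚ) + 1 + 1 ≠ 0 := by positivity
  have g3 : (n : ℚ) + 2 ≠ 0 := by positivity
  field_simp
  ring

/-- The finset of pairs. -/
def pairSet (n : ℕ) : Finset (List ℤ × List ℤ) :=
  (Finset.HasAntidiagonal.antidiagonal (2 * n)).biUnion fun ab =>
    (allPaths ab.1 ×ˢ allPaths ab.2).filter (fun p => |pathHeight p.1 - pathHeight p.2| ≤ 1)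

lemma mem_pairSet (n : ℕ) (PQ : List ℤ × List ℤ) : PQ ∈ pairSet n ↔
    (∃ a b : ℕ, IsDyck a PQ.1 ∧ IsDyck b PQ.2 ∧ a + b = n) ∧
          |pathHeight PQ.1 - pathHeight PQ.2| ≤ 1 := by
  obtain ⟨P, Q⟩ := PQ
  simp only [pairSet, Finset.mem_biUnion, Finset.HasAntidiagonal.mem_antidiagonal, Finset.mem_filter,
    Finset.mem_product, mem_allPaths, IsDyck, Prod.exists]
  constructor
  · rintro ⟨a, b, hab, ⟨⟨hP1, hP2, hP3⟩, hQ1, hQ2, hQ3⟩, h⟩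
    refine ⟨?_, h⟩
    have h1 := (sum_le_length P hP1.1).2
    have h2 := (sum_le_length Q hQ1.1).2
    refine ⟨a / 2, b / 2, ⟨hP1, by omega, hP3⟩, ⟨hQ1, by omega, hQ3⟩, by omega⟩
  · rintro ⟨⟨a, b, hP, hQ, hab⟩, h⟩
    exact ⟨2 * a, 2 * b, by omega, ⟨hP, hQ⟩, h⟩

open PowerSeries in
lemma card_pairSet (n : ℕ) (hn : 1 ≤ n) : ((pairSet n).card : ℚ) = superCatalan 2 n := by
  rw [← final_arith n hn]
  have h := coeff_total n (2 * n) (by omega)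
  have h2 : coeff (2 * n + 2) (4 * X ^ 2 * catS - catS + 1 - 2 * X ^ 2) =
      4 * (catalan n : ℚ) - catalan (n + 1) := by
    have e1 : (4 * X ^ 2 * catS - catS + 1 - 2 * X ^ 2 : PowerSeries ℚ) =
      X ^ 2 * (C (4 : ℚ) * catS - C 2) - catS + 1 := by
      have : (C (4 : ℚ) : PowerSeries ℚ) = 4 := map_ofNat C 4
      rw [this]
      have : (C (2 : ℚ) : PowerSeries ℚ) = 2 := map_ofNat C 2
      rw [this]
      ring
    rw [e1, map_add, map_sub, coeff_X_pow_mul, map_sub, coeff_C_mul, coeff_catS,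
      show 2 * n + 2 = 2 * (n + 1) by ring, coeff_catS, coeff_C, coeff_one, if_neg (by omega),
      if_neg (by omega)]
    ring
  rw [← h2, ← h, pairSet, Finset.card_biUnion]
  · rw [Nat.cast_sum, map_sum]
    simp only [map_add, coeff_mul, ← Finset.sum_add_distrib]
    rw [Finset.sum_comm]
    apply Finset.sum_congr rfl
    rintro ⟨a, b⟩ hab
    rw [Finset.HasAntidiagonal.mem_antidiagonal] at hab
    simp only at hab
    have hle : ∀ m, ∀ P ∈ allPaths m, natHeight P ≤ m := by
      intro m P hP
      rw [mem_allPaths] at hP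
      have := natHeight_le_length P hP.1.1
      omega
    rw [card_close _ _ (2 * n) (fun P hP => (hle _ P hP).trans (by simp only; omega))
      (fun P hP => (hle _ P hP).trans (by simp only; omega))]
    simp only [gS, hS, coeff_mk]
  · rintro ⟨a, b⟩ _ ⟨c, d⟩ _ hne
    rw [Function.onFun, Finset.disjoint_left]
    rintro ⟨P, Q⟩ h1 h2
    simp only [Finset.mem_filter, Finset.mem_product, mem_allPaths] at h1 h2
    apply hne
    rw [Prod.mk.injEq]
    constructor <;> omega

theorem card_pairs_heights_close (n : ℕ) (hn : 1 ≤ n) :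
    (Nat.card {PQ : List ℤ × List ℤ //
        (∃ a b : ℕ, IsDyck a PQ.1 ∧ IsDyck b PQ.2 ∧ a + b = n) ∧
          |pathHeight PQ.1 - pathHeight PQ.2| ≤ 1} : ℚ) = superCatalan 2 n := by
  rw [← card_pairSet n hn, Nat.subtype_card (pairSet n) (mem_pairSet n)]
end
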